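/- Let f : ℝ² → ℝ be a nonconstant real polynomial function of degree d in two variables such that every real critical point of f is nondegenerate and the degree-d homogeneous part f_d has no repeated real linear factors (for every (a,b) ≠ (0,0), (b·x − a·y)² does not divide f_d). Then the set of critical points of f is finite, and the number of critical points at which the Hessian determinant is positive (local extrema) minus the number at which it is negative (saddles) equals 1 − d_R, where d_R is the real degree of f. -/

import Mathlib

open MvPolynomial Filter

/-- Evaluation of a polynomial in two variables at the point `(x, y)`. -/
noncomputable def evalP (f : MvPolynomial (Fin 2) ℝ) (x y : ℝ) : ℝ :=
  MvPolynomial.eval ![x, y] f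

/-- `p` is a critical point of `f`: both partial derivatives vanish at `p`. -/
def IsCriticalPt (f : MvPolynomial (Fin 2) ℝ) (p : ℝ × ℝ) : Prop :=
  evalP (pderiv 0 f) p.1 p.2 = 0 ∧ evalP (pderiv 1 f) p.1 p.2 = 0

/-- The multiplicity of the real linear form `b·x − a·y` in `F`: the largest `m`
such that `(b·x − a·y)^m` divides `F` in `ℝ[x,y]`. -/
noncomputable def linMult (F : MvPolynomial (Fin 2) ℝ) (a b : ℝ) : ℕ :=
  sSup {m : ℕ | (C b * X 0 - C a * X 1) ^ m ∣ F}

/-- The "real degree" of a homogeneous polynomial `F`: the sum, over the points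
`[a : b]` of the real projective line (represented by `[a : 1]` for `a ∈ ℝ`,
together with `[1 : 0]`), of the multiplicity of the real linear factor
`b·x − a·y` in `F`; i.e. the sum of the multiplicities of the real linear
factors of `F`. -/
noncomputable def realDegreeOf (F : MvPolynomial (Fin 2) ℝ) : ℕ :=
  (∑ᶠ a : ℝ, linMult F a 1) + linMult F 1 0

/-- The Hessian determinant `f_xx f_yy − f_xy²` of `f` at `p`. -/
noncomputable def hessDet (f : MvPolynomial (Fin 2) ℝ) (p : ℝ × ℝ) : ℝ :=
  evalP (pderiv 0 (pderiv 0 f)) p.1 p.2 * evalP (pderiv 1 (pderiv 1 f)) p.1 p.2 -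
    (evalP (pderiv 1 (pderiv 0 f)) p.1 p.2) ^ 2

/-!
Identify `ℝ²` with `ℂ`, so that the gradient of `f` becomes a map `∇f : ℂ → ℂ` whose Jacobian
determinant is the Hessian determinant of `f`.

Let `g : ℂ → ℂ` be a `C²` map with nondegenerate zeros. If `h(s) = 1/s` away from `s = 0`, Green's
theorem for the one-form `h(|g|²) ḡ dg` turns the winding integral of `g` along a large circle into
an integral of `ρ(|g|²) det Dg` over the disc, with `ρ` supported near `0`. Changing variables near
each zero of `g`, this integral counts the zeros with the signs of `det Dg`. So the sum of the signs
of the Hessian is the winding number of `∇f` along a large circle.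

On a large circle `∇f` is dominated by `∇f_d`, hence has the same winding number. In the rotating
frame `(e_r, e_θ)` the field `∇f_d` on the unit circle reads `d f_d + i ∂f_d/∂θ`. It crosses the
imaginary axis exactly on the lines where `f_d` vanishes, each time clockwise, so its argument
drops by `π` per real linear factor in every half turn. The frame itself turns once, which gives
the winding number `1 - d_R`.
-/

open MeasureTheory
open scoped ComplexConjugate Finset Real Topology

/-! ### Winding integrals -/

/-- The integral of `γ' / γ` over `[-π, π]`. For a `C¹` loop `γ` that avoids the origin it is `2πi`
times the winding number of `γ` around `0`. -/
noncomputable def windingIntegral (γ : ℝ → ℂ) : ℂ :=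
  ∫ θ in -π..π, logDeriv γ θ

lemma continuous_logDeriv {γ : ℝ → ℂ} (hγ : ContDiff ℝ 1 γ) (hγ0 : ∀ t, γ t ≠ 0) :
    Continuous (logDeriv γ) :=
  (hγ.continuous_deriv le_rfl).div hγ.continuous hγ0

lemma windingIntegral_mul {γ δ : ℝ → ℂ} (hγ : ContDiff ℝ 1 γ) (hδ : ContDiff ℝ 1 δ)
    (hγ0 : ∀ t, γ t ≠ 0) (hδ0 : ∀ t, δ t ≠ 0) :
    windingIntegral (fun t ↦ γ t * δ t) = windingIntegral γ + windingIntegral δ := by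
  have hmul (t : ℝ) : logDeriv (fun t ↦ γ t * δ t) t = logDeriv γ t + logDeriv δ t :=
    logDeriv_mul t (hγ0 t) (hδ0 t) (hγ.differentiable one_ne_zero t)
      (hδ.differentiable one_ne_zero t)
  simp only [windingIntegral, hmul]
  exact intervalIntegral.integral_add ((continuous_logDeriv hγ hγ0).intervalIntegrable _ _)
    ((continuous_logDeriv hδ hδ0).intervalIntegrable _ _)

lemma windingIntegral_const_mul {c : ℂ} (hc : c ≠ 0) (γ : ℝ → ℂ) :
    windingIntegral (fun t ↦ c * γ t) = windingIntegral γ := by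
  simp only [windingIntegral, logDeriv_const_mul _ c hc]

lemma windingIntegral_eq_zero_of_mem_slitPlane {γ : ℝ → ℂ} (hγ : ContDiff ℝ 1 γ)
    (hslit : ∀ t, γ t ∈ Complex.slitPlane) (hclosed : γ (-π) = γ π) :
    windingIntegral γ = 0 := by
  have hlog (t : ℝ) : HasDerivAt (fun s ↦ Complex.log (γ s)) (logDeriv γ t) t :=
    (hγ.differentiable one_ne_zero t).hasDerivAt.clog_real (hslit t)
  rw [windingIntegral, intervalIntegral.integral_eq_sub_of_hasDerivAt (fun t _ ↦ hlog t)
    ((continuous_logDeriv hγ fun t ↦ Complex.slitPlane_ne_zero (hslit t)).intervalIntegrable _ _),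
    hclosed, sub_self]

-- The quotient of the two loops stays in the disc of radius `1` around `1`, where `log` is smooth.
lemma windingIntegral_eq_of_norm_sub_lt {γ δ : ℝ → ℂ} (hγ : ContDiff ℝ 1 γ) (hδ : ContDiff ℝ 1 δ)
    (hγclosed : γ (-π) = γ π) (hδclosed : δ (-π) = δ π) (h : ∀ t, ‖δ t - γ t‖ < ‖γ t‖) :
    windingIntegral δ = windingIntegral γ := by
  have hγ0 (t : ℝ) : γ t ≠ 0 := norm_pos_iff.mp ((norm_nonneg _).trans_lt (h t))
  have hslit (t : ℝ) : δ t / γ t ∈ Complex.slitPlane := by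
    have hlt : ‖(δ t - γ t) / γ t‖ < 1 := by
      rw [norm_div, div_lt_one (norm_pos_iff.mpr (hγ0 t))]
      exact h t
    convert Complex.mem_slitPlane_of_norm_lt_one hlt using 1
    field_simp [hγ0 t]
    ring
  have hquot : ContDiff ℝ 1 fun t ↦ δ t / γ t := by
    simpa only [div_eq_mul_inv] using hδ.mul (hγ.fun_inv hγ0)
  calc windingIntegral δ = windingIntegral fun t ↦ γ t * (δ t / γ t) := by
        simp only [mul_div_cancel₀ _ (hγ0 _)]
    _ = windingIntegral γ + windingIntegral fun t ↦ δ t / γ t :=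
        windingIntegral_mul hγ hquot hγ0 fun t ↦ Complex.slitPlane_ne_zero (hslit t)
    _ = windingIntegral γ := by
        rw [windingIntegral_eq_zero_of_mem_slitPlane hquot hslit (by rw [hγclosed, hδclosed]),
          add_zero]

/-! ### Green's theorem in polar coordinates -/

section Wedge

variable {𝔸 : Type*} [NormedRing 𝔸] [NormedAlgebra ℝ 𝔸]

/-- The value at `(x, y)` of the wedge product `α ∧ β` of two `𝔸`-valued one-forms on a real normed
space, both taken at the same point. -/
noncomputable def wedge {E : Type*} [NormedAddCommGroup E] [NormedSpace ℝ E]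
    (α β : E →L[ℝ] 𝔸) (x y : E) : 𝔸 :=
  α x * β y - α y * β x

-- `dA ∧ dv` is the exterior derivative of the one-form `A dv`.
theorem integral_Icc_wedge_fderiv {A v : ℝ × ℝ → 𝔸} (hA : ContDiff ℝ 1 A) (hv : ContDiff ℝ 2 v)
    {a b : ℝ × ℝ} (hab : a ≤ b) :
    ∫ p in Set.Icc a b, wedge (fderiv ℝ A p) (fderiv ℝ v p) (1, 0) (0, 1) =
      (∫ x in a.1..b.1, A (x, a.2) * fderiv ℝ v (x, a.2) (1, 0)) +
        (∫ y in a.2..b.2, A (b.1, y) * fderiv ℝ v (b.1, y) (0, 1)) -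
        (∫ x in a.1..b.1, A (x, b.2) * fderiv ℝ v (x, b.2) (1, 0)) -
        ∫ y in a.2..b.2, A (a.1, y) * fderiv ℝ v (a.1, y) (0, 1) := by
  have hdv : ContDiff ℝ 1 (fderiv ℝ v) := hv.fderiv_right (by norm_num)
  have hform (w : ℝ × ℝ) : ContDiff ℝ 1 fun p ↦ A p * fderiv ℝ v p w :=
    hA.mul (hdv.clm_apply contDiff_const)
  have hfderiv (w p u : ℝ × ℝ) : fderiv ℝ (fun p ↦ A p * fderiv ℝ v p w) p u =
      A p * fderiv ℝ (fderiv ℝ v) p u w + fderiv ℝ A p u * fderiv ℝ v p w := by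
    have hdvw := (hdv.differentiable one_ne_zero p).hasFDerivAt.clm_apply (hasFDerivAt_const w p)
    simpa using congrArg (fun L : ℝ × ℝ →L[ℝ] 𝔸 ↦ L u)
      ((hA.differentiable one_ne_zero p).hasFDerivAt.fun_mul' hdvw).fderiv
  have hsymm (p : ℝ × ℝ) : fderiv ℝ (fderiv ℝ v) p (1, 0) (0, 1) =
      fderiv ℝ (fderiv ℝ v) p (0, 1) (1, 0) :=
    hv.contDiffAt.isSymmSndFDerivAt (by simp) _ _
  have hdiv (p : ℝ × ℝ) : wedge (fderiv ℝ A p) (fderiv ℝ v p) (1, 0) (0, 1) =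
      fderiv ℝ (fun p ↦ A p * fderiv ℝ v p (0, 1)) p (1, 0) +
        (-fderiv ℝ (fun p ↦ A p * fderiv ℝ v p (1, 0)) p) (0, 1) := by
    rw [neg_apply, hfderiv, hfderiv, hsymm, wedge]
    abel
  simp only [hdiv]
  rw [integral_divergence_prod_Icc_of_hasFDerivAt_of_le
    (fun p ↦ A p * fderiv ℝ v p (0, 1)) (fun p ↦ -(A p * fderiv ℝ v p (1, 0))) _ _ a b hab
    (hform _).continuous.continuousOn (hform _).continuous.neg.continuousOn
    (fun p _ ↦ ((hform _).differentiable one_ne_zero p).hasFDerivAt)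
    (fun p _ ↦ ((hform _).differentiable one_ne_zero p).hasFDerivAt.neg)]
  · simp only [intervalIntegral.integral_neg]
    abel
  · have hcont (u w : ℝ × ℝ) : Continuous fun p ↦ fderiv ℝ (fun p ↦ A p * fderiv ℝ v p w) p u :=
      ((hform w).continuous_fderiv one_ne_zero).clm_apply continuous_const
    exact ((hcont _ _).add (hcont _ _).neg).continuousOn.integrableOn_compact isCompact_Icc

end Wedge

lemma circleMap_neg_pi (c : ℂ) (R : ℝ) : circleMap c R (-π) = circleMap c R π := by
  simpa [two_mul] using (periodic_circleMap c R (-π)).symm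

lemma contDiff_polar {n : WithTop ℕ∞} : ContDiff ℝ n fun p : ℝ × ℝ ↦ circleMap 0 p.1 p.2 := by
  simp only [circleMap_zero]
  exact (Complex.ofRealCLM.contDiff.comp contDiff_fst).mul
    ((Complex.ofRealCLM.contDiff.comp contDiff_snd).mul contDiff_const).cexp

lemma polarCoord_symm_eq_circleMap (p : ℝ × ℝ) :
    Complex.polarCoord.symm p = circleMap 0 p.1 p.2 := by
  rw [Complex.polarCoord_symm_apply, circleMap_zero, Complex.exp_mul_I, Complex.ofReal_cos,
    Complex.ofReal_sin]

theorem setIntegral_ball_eq_setIntegral_Icc_circleMap {E : Type*} [NormedAddCommGroup E]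
    [NormedSpace ℝ E] (f : ℂ → E) (R : ℝ) :
    ∫ z in Metric.ball 0 R, f z =
      ∫ p in Set.Icc ((0, -π) : ℝ × ℝ) (R, π), p.1 • f (circleMap 0 p.1 p.2) := by
  have hset : polarCoord.target ∩ {p : ℝ × ℝ | circleMap 0 p.1 p.2 ∈ Metric.ball (0 : ℂ) R} =
      Set.Ioo 0 R ×ˢ Set.Ioo (-π) π := by
    ext p
    simp only [polarCoord_target, Set.mem_inter_iff, Set.mem_prod, Set.mem_Ioi, Set.mem_ofPred_eq,
      mem_ball_zero_iff, norm_circleMap_zero, Set.mem_Ioo]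
    constructor
    · rintro ⟨⟨h0, hθ⟩, hR⟩
      exact ⟨⟨h0, (abs_of_pos h0).symm.trans_lt hR⟩, hθ⟩
    · rintro ⟨⟨h0, hR⟩, hθ⟩
      exact ⟨⟨h0, hθ⟩, (abs_of_pos h0).trans_lt hR⟩
  have hmeas : MeasurableSet {p : ℝ × ℝ | circleMap 0 p.1 p.2 ∈ Metric.ball (0 : ℂ) R} :=
    Metric.isOpen_ball.measurableSet.preimage (contDiff_polar (n := 0)).continuous.measurable
  calc ∫ z in Metric.ball 0 R, f z = ∫ z, (Metric.ball 0 R).indicator f z :=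
        (integral_indicator Metric.isOpen_ball.measurableSet).symm
    _ = ∫ p in polarCoord.target, p.1 • (Metric.ball 0 R).indicator f (circleMap 0 p.1 p.2) := by
        rw [← Complex.integral_comp_polarCoord_symm]
        simp only [polarCoord_symm_eq_circleMap]
    _ = ∫ p in polarCoord.target,
          {p : ℝ × ℝ | circleMap 0 p.1 p.2 ∈ Metric.ball (0 : ℂ) R}.indicator
            (fun p ↦ p.1 • f (circleMap 0 p.1 p.2)) p := by
        classical simp only [Set.indicator_apply, Set.mem_ofPred_eq, smul_ite, smul_zero]
    _ = ∫ p in Set.Ioo 0 R ×ˢ Set.Ioo (-π) π, p.1 • f (circleMap 0 p.1 p.2) := by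
        rw [setIntegral_indicator hmeas, hset]
    _ = ∫ p in Set.Icc ((0, -π) : ℝ × ℝ) (R, π), p.1 • f (circleMap 0 p.1 p.2) := by
        rw [← Set.Icc_prod_Icc]
        exact setIntegral_congr_set (Measure.set_prod_ae_eq Ioo_ae_eq_Icc Ioo_ae_eq_Icc)

lemma fderiv_apply_zero_one {E : Type*} [NormedAddCommGroup E] [NormedSpace ℝ E]
    {f : ℝ × ℝ → E} {p : ℝ × ℝ} (hf : DifferentiableAt ℝ f p) :
    fderiv ℝ f p (0, 1) = deriv (fun t ↦ f (p.1, t)) p.2 :=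
  (hf.hasFDerivAt.comp_hasDerivAt p.2
    ((hasDerivAt_const p.2 p.1).prodMk (hasDerivAt_id p.2))).deriv.symm

lemma fderiv_apply_one_zero {E : Type*} [NormedAddCommGroup E] [NormedSpace ℝ E]
    {f : ℝ × ℝ → E} {p : ℝ × ℝ} (hf : DifferentiableAt ℝ f p) :
    fderiv ℝ f p (1, 0) = deriv (fun t ↦ f (t, p.2)) p.1 :=
  (hf.hasFDerivAt.comp_hasDerivAt p.1
    ((hasDerivAt_id p.1).prodMk (hasDerivAt_const p.1 p.2))).deriv.symm

lemma fderiv_comp_polar {E : Type*} [NormedAddCommGroup E] [NormedSpace ℝ E] {u : ℂ → E}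
    (hu : Differentiable ℝ u) (p : ℝ × ℝ) :
    fderiv ℝ (fun p : ℝ × ℝ ↦ u (circleMap 0 p.1 p.2)) p =
      (fderiv ℝ u (circleMap 0 p.1 p.2)).comp (fderiv ℝ (fun p ↦ circleMap 0 p.1 p.2) p) :=
  fderiv_comp p (hu _) (contDiff_polar.differentiable one_ne_zero p)

lemma fderiv_polar_one_zero (p : ℝ × ℝ) :
    fderiv ℝ (fun p : ℝ × ℝ ↦ circleMap 0 p.1 p.2) p (1, 0) = circleMap 0 1 p.2 := by
  rw [fderiv_apply_one_zero (contDiff_polar.differentiable one_ne_zero p)]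
  simp only [circleMap_zero, Complex.ofReal_one]
  have h := (Complex.ofRealCLM.hasDerivAt (x := p.1)).mul_const (Complex.exp (p.2 * Complex.I))
  simpa only [Complex.ofRealCLM_apply, Complex.ofReal_one] using h.deriv

lemma fderiv_polar_zero_one (p : ℝ × ℝ) :
    fderiv ℝ (fun p : ℝ × ℝ ↦ circleMap 0 p.1 p.2) p (0, 1) =
      p.1 • (circleMap 0 1 p.2 * Complex.I) := by
  rw [fderiv_apply_zero_one (contDiff_polar.differentiable one_ne_zero p),
    deriv_circleMap]
  simp only [circleMap_zero, Complex.ofReal_one, Complex.real_smul]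
  ring

section Disc

variable {𝔸 : Type*} [NormedRing 𝔸] [NormedAlgebra ℝ 𝔸]

lemma wedge_self_mul_I (α β : ℂ →L[ℝ] 𝔸) (z : ℂ) :
    wedge α β z (z * Complex.I) = ‖z‖ ^ 2 • wedge α β 1 Complex.I := by
  have h (L : ℂ →L[ℝ] 𝔸) : L z = z.re • L 1 + z.im • L Complex.I := by
    rw [← map_smul, ← map_smul, ← map_add]
    simp [Complex.re_add_im]
  have hI (L : ℂ →L[ℝ] 𝔸) : L (z * Complex.I) = z.re • L Complex.I - z.im • L 1 := by
    rw [← map_smul, ← map_smul, ← map_sub]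
    congr 1
    apply Complex.ext <;> simp
  rw [Complex.sq_norm, Complex.normSq_apply]
  simp only [wedge, h, hI, mul_add, add_mul, mul_sub, sub_mul, smul_mul_assoc, mul_smul_comm]
  module

lemma wedge_fderiv_comp_polar {A v : ℂ → 𝔸} (hA : Differentiable ℝ A) (hv : Differentiable ℝ v)
    (p : ℝ × ℝ) :
    wedge (fderiv ℝ (fun p : ℝ × ℝ ↦ A (circleMap 0 p.1 p.2)) p)
        (fderiv ℝ (fun p : ℝ × ℝ ↦ v (circleMap 0 p.1 p.2)) p) (1, 0) (0, 1) =
      p.1 • wedge (fderiv ℝ A (circleMap 0 p.1 p.2)) (fderiv ℝ v (circleMap 0 p.1 p.2))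
        1 Complex.I := by
  have hradial {u : ℂ → 𝔸} (hu : Differentiable ℝ u) :
      fderiv ℝ (fun p : ℝ × ℝ ↦ u (circleMap 0 p.1 p.2)) p (1, 0) =
        fderiv ℝ u (circleMap 0 p.1 p.2) (circleMap 0 1 p.2) := by
    rw [fderiv_comp_polar hu, ContinuousLinearMap.comp_apply, fderiv_polar_one_zero]
  have hangular {u : ℂ → 𝔸} (hu : Differentiable ℝ u) :
      fderiv ℝ (fun p : ℝ × ℝ ↦ u (circleMap 0 p.1 p.2)) p (0, 1) =
        p.1 • fderiv ℝ u (circleMap 0 p.1 p.2) (circleMap 0 1 p.2 * Complex.I) := by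
    rw [fderiv_comp_polar hu, ContinuousLinearMap.comp_apply, fderiv_polar_zero_one, map_smul]
  calc wedge (fderiv ℝ (fun p : ℝ × ℝ ↦ A (circleMap 0 p.1 p.2)) p)
        (fderiv ℝ (fun p : ℝ × ℝ ↦ v (circleMap 0 p.1 p.2)) p) (1, 0) (0, 1)
      = p.1 • wedge (fderiv ℝ A (circleMap 0 p.1 p.2)) (fderiv ℝ v (circleMap 0 p.1 p.2))
          (circleMap 0 1 p.2) (circleMap 0 1 p.2 * Complex.I) := by
        simp only [wedge, hradial hA, hradial hv, hangular hA, hangular hv, mul_smul_comm,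
          smul_mul_assoc, smul_sub]
    _ = _ := by rw [wedge_self_mul_I, norm_circleMap_zero, abs_one, one_pow, one_smul]

theorem integral_ball_wedge_fderiv {A v : ℂ → 𝔸} (hA : ContDiff ℝ 1 A) (hv : ContDiff ℝ 2 v)
    {R : ℝ} (hR : 0 ≤ R) :
    ∫ z in Metric.ball 0 R, wedge (fderiv ℝ A z) (fderiv ℝ v z) 1 Complex.I =
      ∫ θ in -π..π, A (circleMap 0 R θ) * deriv (fun t ↦ v (circleMap 0 R t)) θ := by
  have hAP : ContDiff ℝ 1 fun p : ℝ × ℝ ↦ A (circleMap 0 p.1 p.2) := hA.comp contDiff_polar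
  have hvP : ContDiff ℝ 2 fun p : ℝ × ℝ ↦ v (circleMap 0 p.1 p.2) := hv.comp contDiff_polar
  have hv' := hv.differentiable two_ne_zero
  have hperiodic (r : ℝ) :
      fderiv ℝ (fun p : ℝ × ℝ ↦ v (circleMap 0 p.1 p.2)) (r, -π) (1, 0) =
        fderiv ℝ (fun p : ℝ × ℝ ↦ v (circleMap 0 p.1 p.2)) (r, π) (1, 0) := by
    rw [fderiv_apply_one_zero (hvP.differentiable two_ne_zero _),
      fderiv_apply_one_zero (hvP.differentiable two_ne_zero _)]
    simp only [circleMap_neg_pi]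
  have hcenter (θ : ℝ) :
      fderiv ℝ (fun p : ℝ × ℝ ↦ v (circleMap 0 p.1 p.2)) (0, θ) (0, 1) = 0 := by
    rw [fderiv_comp_polar hv', ContinuousLinearMap.comp_apply, fderiv_polar_zero_one, zero_smul,
      map_zero]
  rw [setIntegral_ball_eq_setIntegral_Icc_circleMap]
  simp only [← wedge_fderiv_comp_polar (hA.differentiable one_ne_zero) hv']
  rw [integral_Icc_wedge_fderiv hAP hvP
    (Prod.mk_le_mk.mpr ⟨hR, by linarith [Real.pi_pos]⟩)]
  simp only [hcenter, hperiodic, circleMap_neg_pi, mul_zero,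
    intervalIntegral.integral_zero, sub_zero, add_sub_cancel_left]
  congr with θ
  rw [fderiv_apply_zero_one (hvP.differentiable two_ne_zero _)]

end Disc

/-! ### Radial area densities -/

lemma det_eq_re_mul_im_sub (L : ℂ →L[ℝ] ℂ) :
    L.det = (L 1).re * (L Complex.I).im - (L Complex.I).re * (L 1).im := by
  rw [ContinuousLinearMap.det, ← LinearMap.det_toMatrix Complex.basisOneI, Matrix.det_fin_two]
  simp [LinearMap.toMatrix_apply]

/-- The density `ρ` for which `d (h(|w|²) w̄ dw) = i ρ(|w|²) du ∧ dv`, where `w = u + iv`. -/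
noncomputable def radialDensity (h : ℝ → ℝ) (s : ℝ) : ℝ :=
  2 * (h s + s * deriv h s)

lemma continuous_radialDensity {h : ℝ → ℝ} (hh : ContDiff ℝ 1 h) :
    Continuous (radialDensity h) :=
  continuous_const.mul (hh.continuous.add (continuous_id.mul (hh.continuous_deriv le_rfl)))

lemma radialDensity_eq_zero {h : ℝ → ℝ} {c s : ℝ} (hc : 0 ≤ c) (hinv : ∀ t ≥ c, h t = t⁻¹)
    (hs : c < s) : radialDensity h s = 0 := by
  have hs0 : s ≠ 0 := (hc.trans_lt hs).ne'
  have hev : h =ᶠ[𝓝 s] fun t ↦ t⁻¹ := by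
    filter_upwards [eventually_gt_nhds hs] with t ht using hinv t ht.le
  rw [radialDensity, hinv s hs.le, hev.deriv_eq, deriv_inv]
  field_simp
  ring

lemma exists_contDiff_eq_inv {c : ℝ} (hc : 0 < c) :
    ∃ h : ℝ → ℝ, ContDiff ℝ 1 h ∧ ∀ s ≥ c, h s = s⁻¹ := by
  refine ⟨fun s ↦ Real.smoothTransition (2 * s / c - 1) * s⁻¹, ?_, fun s hs ↦ ?_⟩
  · refine contDiff_iff_contDiffAt.mpr fun s ↦ ?_
    rcases eq_or_ne s 0 with rfl | hs
    · have hev : (fun s ↦ Real.smoothTransition (2 * s / c - 1) * s⁻¹) =ᶠ[𝓝 0] fun _ ↦ 0 := by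
        filter_upwards [eventually_lt_nhds (half_pos hc)] with s hs
        rw [Real.smoothTransition.zero_of_nonpos, zero_mul]
        rw [sub_nonpos, div_le_one hc]
        linarith
      exact contDiffAt_const.congr_of_eventuallyEq hev
    · exact (Real.smoothTransition.contDiff.contDiffAt.comp s (by fun_prop)).mul
        (contDiffAt_inv ℝ hs)
  · beta_reduce
    rw [Real.smoothTransition.one_of_one_le, one_mul]
    rw [le_sub_iff_add_le, le_div_iff₀ hc]
    linarith

lemma wedge_fderiv_radial {h : ℝ → ℝ} {g : ℂ → ℂ} {z : ℂ} (hh : DifferentiableAt ℝ h (‖g z‖ ^ 2))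
    (hg : DifferentiableAt ℝ g z) :
    wedge (fderiv ℝ (fun z ↦ (h (‖g z‖ ^ 2) : ℂ) * conj (g z)) z) (fderiv ℝ g z) 1 Complex.I =
      ((radialDensity h (‖g z‖ ^ 2) * (fderiv ℝ g z).det : ℝ) : ℂ) * Complex.I := by
  have hconj : HasFDerivAt (fun z ↦ conj (g z))
      ((Complex.conjCLE : ℂ →L[ℝ] ℂ).comp (fderiv ℝ g z)) z :=
    (Complex.conjCLE : ℂ →L[ℝ] ℂ).hasFDerivAt.comp z hg.hasFDerivAt
  have hradial := Complex.ofRealCLM.hasFDerivAt.comp z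
    (hh.hasDerivAt.hasFDerivAt.comp z hg.hasFDerivAt.norm_sq)
  have hform (w : ℂ) : fderiv ℝ (fun z ↦ (h (‖g z‖ ^ 2) : ℂ) * conj (g z)) z w =
      h (‖g z‖ ^ 2) * conj (fderiv ℝ g z w) +
        conj (g z) * (2 * (inner ℝ (g z) (fderiv ℝ g z w) * deriv h (‖g z‖ ^ 2)) : ℝ) := by
    simpa using congrArg (fun L : ℂ →L[ℝ] ℂ ↦ L w) (hradial.fun_mul hconj).fderiv
  rw [wedge, hform, hform, det_eq_re_mul_im_sub, radialDensity, Complex.inner, Complex.inner]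
  have hnorm : ‖g z‖ ^ 2 = (g z).re * (g z).re + (g z).im * (g z).im := by
    rw [Complex.sq_norm, Complex.normSq_apply]
  generalize deriv h (‖g z‖ ^ 2) = h', h (‖g z‖ ^ 2) = h₀
  rw [hnorm]
  apply Complex.ext <;>
    simp only [Complex.add_re, Complex.add_im, Complex.sub_re, Complex.sub_im, Complex.mul_re,
      Complex.mul_im, Complex.conj_re, Complex.conj_im, Complex.ofReal_re, Complex.ofReal_im,
      Complex.I_re, Complex.I_im] <;>
    ring

theorem integral_ball_radialDensity_mul_det {h : ℝ → ℝ} (hh : ContDiff ℝ 1 h) {g : ℂ → ℂ}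
    (hg : ContDiff ℝ 2 g) {R : ℝ} (hR : 0 ≤ R) :
    ((∫ z in Metric.ball 0 R, radialDensity h (‖g z‖ ^ 2) * (fderiv ℝ g z).det : ℝ) : ℂ) *
        Complex.I =
      ∫ θ in -π..π, (h (‖g (circleMap 0 R θ)‖ ^ 2) : ℂ) * conj (g (circleMap 0 R θ)) *
        deriv (fun t ↦ g (circleMap 0 R t)) θ := by
  have hA : ContDiff ℝ 1 fun z ↦ (h (‖g z‖ ^ 2) : ℂ) * conj (g z) := by
    have hg1 := hg.of_le one_le_two
    exact (Complex.ofRealCLM.contDiff.comp (hh.comp (hg1.norm_sq ℝ))).mul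
      (Complex.conjCLE.contDiff.comp hg1)
  rw [← integral_ball_wedge_fderiv hA hg hR, ← integral_complex_ofReal, ← integral_mul_const]
  congr with z
  exact (wedge_fderiv_radial (hh.differentiable one_ne_zero _)
    (hg.differentiable two_ne_zero z)).symm

theorem integral_ball_radialDensity_mul_det_eq_windingIntegral {h : ℝ → ℝ} (hh : ContDiff ℝ 1 h)
    {c : ℝ} (hc : 0 < c) (hinv : ∀ s ≥ c, h s = s⁻¹) {g : ℂ → ℂ} (hg : ContDiff ℝ 2 g) {R : ℝ}
    (hR : 0 ≤ R) (hgR : ∀ z ∈ Metric.sphere (0 : ℂ) R, c ≤ ‖g z‖ ^ 2) :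
    ((∫ z in Metric.ball 0 R, radialDensity h (‖g z‖ ^ 2) * (fderiv ℝ g z).det : ℝ) : ℂ) *
        Complex.I =
      windingIntegral fun θ ↦ g (circleMap 0 R θ) := by
  rw [integral_ball_radialDensity_mul_det hh hg hR, windingIntegral]
  congr with θ
  have hcθ := hgR _ (circleMap_mem_sphere 0 hR θ)
  have hne : g (circleMap 0 R θ) ≠ 0 := fun h0 ↦ by simp [h0, hc.not_ge] at hcθ
  rw [hinv _ hcθ, Complex.sq_norm, Complex.ofReal_inv, ← Complex.mul_conj, logDeriv_apply]
  have hne' : conj (g (circleMap 0 R θ)) ≠ 0 := (map_ne_zero _).mpr hne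
  field_simp

lemma windingIntegral_circleMap {R : ℝ} (hR : R ≠ 0) :
    windingIntegral (circleMap 0 R) = 2 * π * Complex.I := by
  have h (θ : ℝ) : logDeriv (circleMap 0 R) θ = Complex.I := by
    rw [logDeriv_apply, deriv_circleMap, mul_div_cancel_left₀ _ (circleMap_ne_center hR)]
  simp only [windingIntegral, h, intervalIntegral.integral_const, sub_neg_eq_add, Complex.real_smul]
  push_cast
  ring

theorem integral_radialDensity {h : ℝ → ℝ} (hh : ContDiff ℝ 1 h) {c : ℝ} (hc : 0 < c)
    (hinv : ∀ s ≥ c, h s = s⁻¹) : ∫ w : ℂ, radialDensity h (‖w‖ ^ 2) = 2 * π := by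
  have hR : 0 < c + 1 := by positivity
  have hsq {w : ℂ} (hw : c + 1 ≤ ‖w‖) : c < ‖w‖ ^ 2 := by nlinarith
  have hball : ∫ w in Metric.ball (0 : ℂ) (c + 1), radialDensity h (‖w‖ ^ 2) =
      ∫ w : ℂ, radialDensity h (‖w‖ ^ 2) := by
    refine setIntegral_eq_integral_of_forall_compl_eq_zero fun w hw ↦ ?_
    rw [mem_ball_zero_iff, not_lt] at hw
    exact radialDensity_eq_zero hc.le hinv (hsq hw)
  have hwind := integral_ball_radialDensity_mul_det_eq_windingIntegral hh hc hinv contDiff_id hR.le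
    fun z hz ↦ (hsq (mem_sphere_zero_iff_norm.mp hz).ge).le
  simp only [id, fderiv_id, ContinuousLinearMap.det, ContinuousLinearMap.coe_id, LinearMap.det_id,
    mul_one, hball, windingIntegral_circleMap hR.ne'] at hwind
  exact_mod_cast mul_right_cancel₀ Complex.I_ne_zero hwind

/-! ### Local degree -/

lemma finite_setOf_mem_and_eq_zero {X Y : Type*} [TopologicalSpace X] [TopologicalSpace Y]
    [T1Space Y] [Zero Y] {f : X → Y} (hf : Continuous f) {K : Set X} (hK : IsCompact K)
    (hiso : ∀ x ∈ K, f x = 0 → ∀ᶠ y in 𝓝[≠] x, f y ≠ 0) : {x ∈ K | f x = 0}.Finite := by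
  have hmem : {x | f x ≠ 0} ∈ codiscreteWithin K := by
    rw [mem_codiscreteWithin_iff_forall_mem_nhdsNE]
    intro x hx
    have hne : ∀ᶠ y in 𝓝[≠] x, f y ≠ 0 := by
      by_cases hfx : f x = 0
      · exact hiso x hx hfx
      · exact (hf.continuousAt.eventually_ne hfx).filter_mono nhdsWithin_le_nhds
    filter_upwards [hne] with y hy using Or.inl hy
  refine (hK.finite_sdiff_of_mem_codiscreteWithin hmem).subset fun x hx ↦ ⟨hx.1, ?_⟩
  exact not_not_intro hx.2

lemma eventually_forall_notMem_lt_norm {E : Type*} [SeminormedAddGroup E] {A : Set E}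
    (hA : A ∈ 𝓝 0) :
    ∀ᶠ ε : ℝ in 𝓝[>] 0, ∀ w ∉ A, ε < ‖w‖ := by
  obtain ⟨r, hr, hrA⟩ := Metric.mem_nhds_iff.mp hA
  filter_upwards [nhdsWithin_le_nhds (eventually_lt_nhds hr)] with ε hε w hw
  exact hε.trans_le (not_lt.mp fun hlt ↦ hw (hrA (mem_ball_zero_iff.mpr hlt)))

section LocalDegree

variable {E : Type*} [NormedAddCommGroup E] [NormedSpace ℝ E] [FiniteDimensional ℝ E]
  {g : E → E} {z : E}

lemma hasStrictFDerivAt_equiv_of_det_ne_zero (hg : ContDiffAt ℝ 1 g z)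
    (hdet : (fderiv ℝ g z).det ≠ 0) :
    HasStrictFDerivAt g
      ((fderiv ℝ g z).toContinuousLinearEquivOfDetNeZero hdet : E →L[ℝ] E) z := by
  rw [ContinuousLinearMap.coe_toContinuousLinearEquivOfDetNeZero]
  exact hg.hasStrictFDerivAt one_ne_zero

lemma eventually_nhdsNE_ne_of_det_ne_zero (hg : ContDiffAt ℝ 1 g z)
    (hdet : (fderiv ℝ g z).det ≠ 0) (w : E) : ∀ᶠ y in 𝓝[≠] z, g y ≠ w :=
  (hasStrictFDerivAt_equiv_of_det_ne_zero hg hdet).hasFDerivAt.eventually_ne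
    ⟨_, ContinuousLinearEquiv.antilipschitz _⟩

lemma exists_isOpen_injOn_image_mem_nhds (hg : ContDiff ℝ 1 g) (hdet : (fderiv ℝ g z).det ≠ 0)
    {V : Set E} (hV : V ∈ 𝓝 z) :
    ∃ U ⊆ V, IsOpen U ∧ z ∈ U ∧ Set.InjOn g U ∧ g '' U ∈ 𝓝 (g z) ∧
      ∀ x ∈ U, SignType.sign (fderiv ℝ g x).det = SignType.sign (fderiv ℝ g z).det := by
  have : CompleteSpace E := FiniteDimensional.complete ℝ E
  have hstrict := hasStrictFDerivAt_equiv_of_det_ne_zero hg.contDiffAt hdet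
  have hcont : Continuous fun x ↦ (fderiv ℝ g x).det :=
    ContinuousLinearMap.continuous_det.comp (hg.continuous_fderiv one_ne_zero)
  have hsign : ∀ᶠ x in 𝓝 z,
      SignType.sign (fderiv ℝ g x).det = SignType.sign (fderiv ℝ g z).det :=
    ((continuousAt_sign_of_ne_zero hdet).comp_of_eq hcont.continuousAt rfl).eventually_mem
      ((isOpen_discrete {SignType.sign (fderiv ℝ g z).det}).mem_nhds rfl)
  obtain ⟨U, hU, hUo, hzU⟩ := mem_nhds_iff.mp (inter_mem (inter_mem hV hsign)
    (hstrict.toOpenPartialHomeomorph g |>.open_source.mem_nhds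
      hstrict.mem_toOpenPartialHomeomorph_source))
  refine ⟨U, fun x hx ↦ (hU hx).1.1, hUo, hzU, ?_, ?_, fun x hx ↦ (hU hx).1.2⟩
  · exact (hstrict.toOpenPartialHomeomorph g).injOn.mono fun x hx ↦ (hU hx).2
  · rw [← hstrict.map_nhds_eq_of_equiv]
    exact image_mem_map (hUo.mem_nhds hzU)

theorem setIntegral_comp_mul_det [MeasurableSpace E] [BorelSpace E] (μ : Measure E)
    [μ.IsAddHaarMeasure] {U : Set E} (hU : MeasurableSet U) (hg : Differentiable ℝ g)
    (hinj : Set.InjOn g U) {σ : SignType} (hσ : ∀ x ∈ U, SignType.sign (fderiv ℝ g x).det = σ)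
    {φ : E → ℝ} (hφ : ∀ w ∉ g '' U, φ w = 0) :
    ∫ x in U, φ (g x) * (fderiv ℝ g x).det ∂μ = σ * ∫ w, φ w ∂μ := by
  rw [← setIntegral_eq_integral_of_forall_compl_eq_zero hφ,
    integral_image_eq_integral_abs_det_fderiv_smul μ hU
      (fun x _ ↦ (hg x).hasFDerivAt.hasFDerivWithinAt) hinj, ← integral_const_mul]
  refine setIntegral_congr_fun hU fun x hx ↦ ?_
  calc φ (g x) * (fderiv ℝ g x).det = φ (g x) * (σ * |(fderiv ℝ g x).det|) := by
        rw [← hσ x hx, sign_mul_abs]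
    _ = σ * (|(fderiv ℝ g x).det| • φ (g x)) := by
        rw [smul_eq_mul]
        ring

lemma exists_pairwiseDisjoint_injOn_image_mem_nhds (hg : ContDiff ℝ 1 g) {B : Set E}
    (hB : IsOpen B) {S : Finset E} (hSB : ∀ z ∈ S, z ∈ B)
    (hdet : ∀ z ∈ S, (fderiv ℝ g z).det ≠ 0) :
    ∃ U : E → Set E, (S : Set E).PairwiseDisjoint U ∧ ∀ z ∈ S,
      U z ⊆ B ∧ IsOpen (U z) ∧ z ∈ U z ∧ Set.InjOn g (U z) ∧ g '' U z ∈ 𝓝 (g z) ∧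
        ∀ x ∈ U z, SignType.sign (fderiv ℝ g x).det = SignType.sign (fderiv ℝ g z).det := by
  obtain ⟨V, hV, hVdisj⟩ := S.finite_toSet.t2_separation
  choose! U hUV hU using fun z (hz : z ∈ S) ↦ exists_isOpen_injOn_image_mem_nhds hg (hdet z hz)
    (inter_mem ((hV z).2.mem_nhds (hV z).1) (hB.mem_nhds (hSB z hz)))
  exact ⟨U, hVdisj.mono_on fun z hz ↦ (hUV z hz).trans Set.inter_subset_left,
    fun z hz ↦ ⟨(hUV z hz).trans Set.inter_subset_right, hU z hz⟩⟩

-- Away from small neighbourhoods of the zeros `‖g‖` exceeds some `ε > 0`, and near each zero `g` is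
-- a diffeomorphism onto a neighbourhood of the closed `ε`-ball, which carries `φ`.
theorem exists_setIntegral_comp_mul_det_eq_sum_sign [MeasurableSpace E] [BorelSpace E]
    (μ : Measure E) [μ.IsAddHaarMeasure] (hg : ContDiff ℝ 1 g) {B : Set E} (hB : IsOpen B)
    (hBbdd : Bornology.IsBounded B) {S : Finset E} (hS : ∀ z, z ∈ S ↔ z ∈ closure B ∧ g z = 0)
    (hSB : ∀ z ∈ S, z ∈ B) (hdet : ∀ z ∈ S, (fderiv ℝ g z).det ≠ 0) :
    ∃ ε > 0, (∀ z ∈ closure B \ B, ε < ‖g z‖) ∧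
      ∀ φ : E → ℝ, Continuous φ → (∀ w, ε < ‖w‖ → φ w = 0) →
        ∫ x in B, φ (g x) * (fderiv ℝ g x).det ∂μ =
          (∑ z ∈ S, (SignType.sign (fderiv ℝ g z).det : ℤ) : ℤ) * ∫ w, φ w ∂μ := by
  obtain ⟨U, hUdisj, hU⟩ := exists_pairwiseDisjoint_injOn_image_mem_nhds hg hB hSB hdet
  choose! hUB hUo hzU hinj himage hsign using hU
  set W : Set E := ⋃ z ∈ S, U z
  have hWB : W ⊆ B := Set.iUnion₂_subset hUB
  have hgK : (g '' (closure B \ W))ᶜ ∈ 𝓝 0 := by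
    have hK : IsCompact (closure B \ W) := hBbdd.isCompact_closure.diff (isOpen_biUnion hUo)
    refine (hK.image hg.continuous).isClosed.isOpen_compl.mem_nhds ?_
    rintro ⟨z, ⟨hzB, hzW⟩, hgz⟩
    have hzS := (hS z).mpr ⟨hzB, hgz⟩
    exact hzW (Set.mem_biUnion hzS (hzU z hzS))
  have himage0 (z : E) (hz : z ∈ S) : g '' U z ∈ 𝓝 0 := ((hS z).mp hz).2 ▸ himage z hz
  obtain ⟨ε, ⟨hεU, hεK⟩, hε⟩ := (((S.eventually_all.mpr fun z hz ↦
    eventually_forall_notMem_lt_norm (himage0 z hz)).and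
      (eventually_forall_notMem_lt_norm hgK)).and
        (self_mem_nhdsWithin : Set.Ioi (0 : ℝ) ∈ 𝓝[>] 0)).exists
  have hεW (z : E) (hz : z ∈ closure B \ W) : ε < ‖g z‖ := hεK _ (not_not_intro ⟨z, hz, rfl⟩)
  refine ⟨ε, hε, fun z hz ↦ hεW z ⟨hz.1, fun hzW ↦ hz.2 (hWB hzW)⟩, fun φ hφ hφε ↦ ?_⟩
  have hint : IntegrableOn (fun x ↦ φ (g x) * (fderiv ℝ g x).det) (closure B) μ :=
    ((hφ.comp hg.continuous).mul (ContinuousLinearMap.continuous_det.comp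
      (hg.continuous_fderiv one_ne_zero))).continuousOn.integrableOn_compact
        hBbdd.isCompact_closure
  rw [setIntegral_eq_of_subset_of_forall_sdiff_eq_zero hB.measurableSet hWB fun x hx ↦ by
      rw [hφε _ (hεW x ⟨subset_closure hx.1, hx.2⟩), zero_mul],
    integral_biUnion_finset S (fun z hz ↦ (hUo z hz).measurableSet) hUdisj
      fun z hz ↦ hint.mono_set ((hUB z hz).trans subset_closure), Int.cast_sum, Finset.sum_mul]
  refine Finset.sum_congr rfl fun z hz ↦ ?_
  rw [setIntegral_comp_mul_det μ (hUo z hz).measurableSet (hg.differentiable one_ne_zero)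
    (hinj z hz) (hsign z hz) fun w hw ↦ hφε w (hεU z hz w hw), SignType.intCast_cast]

end LocalDegree

theorem windingIntegral_eq_sum_sign_det {g : ℂ → ℂ} (hg : ContDiff ℝ 2 g) {R : ℝ} (hR : 0 < R)
    {S : Finset ℂ} (hS : ∀ z, z ∈ S ↔ z ∈ Metric.closedBall 0 R ∧ g z = 0)
    (hSR : ∀ z ∈ S, z ∈ Metric.ball 0 R) (hdet : ∀ z ∈ S, (fderiv ℝ g z).det ≠ 0) :
    windingIntegral (fun θ ↦ g (circleMap 0 R θ)) =
      2 * π * Complex.I * (∑ z ∈ S, (SignType.sign (fderiv ℝ g z).det : ℤ) : ℤ) := by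
  rw [← closure_ball 0 hR.ne'] at hS
  obtain ⟨ε, hε, hεR, hdegree⟩ := exists_setIntegral_comp_mul_det_eq_sum_sign volume
    (hg.of_le one_le_two) Metric.isOpen_ball Metric.isBounded_ball hS hSR hdet
  obtain ⟨h, hh, hinv⟩ := exists_contDiff_eq_inv (sq_pos_of_pos hε)
  have hsq {w : ℂ} (hw : ε < ‖w‖) : ε ^ 2 < ‖w‖ ^ 2 := pow_lt_pow_left₀ hw hε.le two_ne_zero
  have hcircle (z : ℂ) (hz : z ∈ Metric.sphere 0 R) : ε < ‖g z‖ := by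
    rw [mem_sphere_zero_iff_norm] at hz
    exact hεR z ⟨by simp [closure_ball _ hR.ne', hz], by simp [hz]⟩
  rw [← integral_ball_radialDensity_mul_det_eq_windingIntegral hh (sq_pos_of_pos hε) hinv hg hR.le
      fun z hz ↦ (hsq (hcircle z hz)).le,
    hdegree (fun w ↦ radialDensity h (‖w‖ ^ 2))
      ((continuous_radialDensity hh).comp (continuous_norm.pow 2))
      fun w hw ↦ radialDensity_eq_zero (sq_nonneg ε) hinv (hsq hw),
    integral_radialDensity hh (sq_pos_of_pos hε) hinv]
  rw [Complex.ofReal_mul, Complex.ofReal_intCast]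
  push_cast
  ring

/-! ### Clockwise crossings of the imaginary axis -/

theorem integral_eq_sub_sub_sum_jump {E : Type*} [NormedAddCommGroup E] [NormedSpace ℝ E]
    [CompleteSpace E] {f f' l r : ℝ → E} {a b : ℝ} {fa fb : E} {Z : Finset ℝ} (hab : a < b)
    (hZ : ∀ z ∈ Z, z ∈ Set.Ioo a b)
    (hderiv : ∀ x ∈ Set.Ioo a b, x ∉ Z → HasDerivAt f (f' x) x)
    (hint : IntervalIntegrable f' volume a b)
    (hl : ∀ z ∈ Z, Tendsto f (𝓝[<] z) (𝓝 (l z))) (hr : ∀ z ∈ Z, Tendsto f (𝓝[>] z) (𝓝 (r z)))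
    (ha : Tendsto f (𝓝[>] a) (𝓝 fa)) (hb : Tendsto f (𝓝[<] b) (𝓝 fb)) :
    ∫ x in a..b, f' x = fb - fa - ∑ z ∈ Z, (r z - l z) := by
  induction Z using Finset.induction_on_max generalizing b fb with
  | empty =>
    rw [intervalIntegral.integral_eq_sub_of_hasDerivAt_of_tendsto hab
      (fun x hx ↦ hderiv x hx (Finset.notMem_empty x)) hint ha hb, Finset.sum_empty, sub_zero]
  | insert c Z hmax ih =>
    simp only [Finset.forall_mem_insert] at hZ hl hr
    have hac : a < c := hZ.1.1
    have hcb : c < b := hZ.1.2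
    have hleft : IntervalIntegrable f' volume a c :=
      hint.mono_set (Set.uIcc_subset_uIcc_left (Set.mem_uIcc_of_le hac.le hcb.le))
    have hright : IntervalIntegrable f' volume c b :=
      hint.mono_set (Set.uIcc_subset_uIcc_right (Set.mem_uIcc_of_le hac.le hcb.le))
    rw [← intervalIntegral.integral_add_adjacent_intervals hleft hright,
      ih hac (fun z hz ↦ ⟨(hZ.2 z hz).1, hmax z hz⟩)
        (fun x hx hxZ ↦ hderiv x ⟨hx.1, hx.2.trans hcb⟩ (by simp [hx.2.ne, hxZ]))
        hleft hl.2 hr.2 hl.1,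
      intervalIntegral.integral_eq_sub_of_hasDerivAt_of_tendsto hcb
        (fun x hx ↦ hderiv x ⟨hac.trans hx.1, hx.2⟩ ?_) hright hr.1 hb,
      Finset.sum_insert fun hc ↦ (hmax c hc).false]
    · abel
    · rw [Finset.mem_insert, not_or]
      exact ⟨hx.1.ne', fun hxZ ↦ (hmax x hxZ).not_gt hx.1⟩

lemma hasDerivAt_arctan_im_div_re {ζ : ℝ → ℂ} {ζ' : ℂ} {t : ℝ} (hζ : HasDerivAt ζ ζ' t)
    (hre : (ζ t).re ≠ 0) :
    HasDerivAt (fun s ↦ Real.arctan ((ζ s).im / (ζ s).re)) (ζ' / ζ t).im t := by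
  have hre' : HasDerivAt (fun s ↦ (ζ s).re) ζ'.re t :=
    Complex.reCLM.hasFDerivAt.comp_hasDerivAt t hζ
  have him' : HasDerivAt (fun s ↦ (ζ s).im) ζ'.im t :=
    Complex.imCLM.hasFDerivAt.comp_hasDerivAt t hζ
  convert (him'.fun_div hre' hre).arctan using 1
  rw [Complex.div_im, Complex.normSq_apply]
  field_simp

lemma tendsto_arctan_im_div_re_of_re_eq_zero {ζ : ℝ → ℂ} {ζ' : ℂ} {t : ℝ}
    (hζ : HasDerivAt ζ ζ' t) (hre : (ζ t).re = 0) (hcross : 0 < ζ'.re * (ζ t).im) :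
    Tendsto (fun s ↦ Real.arctan ((ζ s).im / (ζ s).re)) (𝓝[<] t) (𝓝 (-(π / 2))) ∧
      Tendsto (fun s ↦ Real.arctan ((ζ s).im / (ζ s).re)) (𝓝[>] t) (𝓝 (π / 2)) := by
  have him : (ζ t).im ≠ 0 := right_ne_zero_of_mul hcross.ne'
  have hre' : HasDerivAt (fun s ↦ (ζ s).re) ζ'.re t :=
    Complex.reCLM.hasFDerivAt.comp_hasDerivAt t hζ
  have him' : HasDerivAt (fun s ↦ (ζ s).im) ζ'.im t :=
    Complex.imCLM.hasFDerivAt.comp_hasDerivAt t hζ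
  set q : ℝ → ℝ := fun s ↦ (ζ s).re / (ζ s).im
  have hq : HasDerivAt q (ζ'.re * (ζ t).im / (ζ t).im ^ 2) t := by
    simpa [hre] using hre'.fun_div him' him
  have hqt : q t = 0 := by simp [q, hre]
  have hsign : ∀ᶠ s in 𝓝 t, SignType.sign (q s) = SignType.sign (s - t) :=
    eventually_nhdsWithin_sign_eq_of_deriv_pos (by rw [hq.deriv]; positivity) hqt
  have hq0 : Tendsto q (𝓝 t) (𝓝 0) := hqt ▸ hq.continuousAt.tendsto
  simp_rw [← inv_div (ζ _).re]
  constructor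
  · have hlt : Tendsto q (𝓝[<] t) (𝓝[<] 0) := by
      refine tendsto_nhdsWithin_iff.mpr ⟨hq0.mono_left nhdsWithin_le_nhds, ?_⟩
      filter_upwards [nhdsWithin_le_nhds hsign, self_mem_nhdsWithin] with s hs hst
      rwa [sign_neg (sub_neg.mpr hst), sign_eq_neg_one_iff] at hs
    exact ((tendsto_nhds_of_tendsto_nhdsWithin Real.tendsto_arctan_atBot).comp
      tendsto_inv_nhdsLT_zero).comp hlt
  · have hgt : Tendsto q (𝓝[>] t) (𝓝[>] 0) := by
      refine tendsto_nhdsWithin_iff.mpr ⟨hq0.mono_left nhdsWithin_le_nhds, ?_⟩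
      filter_upwards [nhdsWithin_le_nhds hsign, self_mem_nhdsWithin] with s hs hst
      rwa [sign_pos (sub_pos.mpr hst), sign_eq_one_iff] at hs
    exact ((tendsto_nhds_of_tendsto_nhdsWithin Real.tendsto_arctan_atTop).comp
      tendsto_inv_nhdsGT_zero).comp hgt

-- `ζ` crosses the imaginary axis clockwise at every `t ∈ Z`, so its argument drops by `π` between
-- consecutive crossings.
theorem integral_im_logDeriv_eq_neg_pi_mul_card {ζ : ℝ → ℂ} (hζ : ContDiff ℝ 1 ζ)
    (hζ0 : ∀ t, ζ t ≠ 0) (hcross : ∀ t, (ζ t).re = 0 → 0 < (deriv ζ t).re * (ζ t).im)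
    {a b c : ℝ} (hab : a < b) (hc : c ≠ 0) (hζab : ζ b = c * ζ a) {Z : Finset ℝ}
    (hZ : ∀ t, t ∈ Z ↔ t ∈ Set.Ico a b ∧ (ζ t).re = 0) :
    ∫ t in a..b, (logDeriv ζ t).im = -π * Z.card := by
  have hd (t : ℝ) : HasDerivAt ζ (deriv ζ t) t := (hζ.differentiable one_ne_zero t).hasDerivAt
  set A : ℝ → ℝ := fun t ↦ Real.arctan ((ζ t).im / (ζ t).re)
  have hA (t : ℝ) (ht : (ζ t).re ≠ 0) : HasDerivAt A (logDeriv ζ t).im t :=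
    hasDerivAt_arctan_im_div_re (hd t) ht
  have hjump (t : ℝ) (ht : (ζ t).re = 0) :=
    tendsto_arctan_im_div_re_of_re_eq_zero (hd t) ht (hcross t ht)
  have hint : IntervalIntegrable (fun t ↦ (logDeriv ζ t).im) volume a b :=
    (Complex.continuous_im.comp (continuous_logDeriv hζ hζ0)).intervalIntegrable _ _
  have hFTC {Aa Ab : ℝ} (ha : Tendsto A (𝓝[>] a) (𝓝 Aa)) (hb : Tendsto A (𝓝[<] b) (𝓝 Ab)) :
      ∫ t in a..b, (logDeriv ζ t).im = Ab - Aa - π * (Z.erase a).card := by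
    rw [integral_eq_sub_sub_sum_jump (Z := Z.erase a) hab ?_ ?_ hint
      (fun z hz ↦ (hjump z ((hZ z).mp (Finset.mem_of_mem_erase hz)).2).1)
      (fun z hz ↦ (hjump z ((hZ z).mp (Finset.mem_of_mem_erase hz)).2).2) ha hb]
    · simp [mul_comm]
    · intro z hz
      obtain ⟨hza, hzZ⟩ := Finset.mem_erase.mp hz
      exact ⟨((hZ z).mp hzZ).1.1.lt_of_ne' hza, ((hZ z).mp hzZ).1.2⟩
    · intro t ht htZ
      refine hA t fun hre ↦ htZ ?_
      exact Finset.mem_erase.mpr ⟨ht.1.ne', (hZ t).mpr ⟨Set.Ioo_subset_Ico_self ht, hre⟩⟩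
  by_cases hre : (ζ a).re = 0
  · have haZ : a ∈ Z := (hZ a).mpr ⟨Set.left_mem_Ico.mpr hab, hre⟩
    rw [hFTC (hjump a hre).2 (hjump b (by simp [hζab, hre])).1, ← Finset.card_erase_add_one haZ]
    push_cast
    ring
  · have hreb : (ζ b).re ≠ 0 := by simp [hζab, hre, hc]
    have haZ : a ∉ Z := fun h ↦ hre ((hZ a).mp h).2
    have hAab : A b = A a := by simp [A, hζab, mul_div_mul_left _ _ hc]
    rw [hFTC ((hA a hre).continuousAt.mono_left nhdsWithin_le_nhds)
      ((hA b hreb).continuousAt.mono_left nhdsWithin_le_nhds), hAab,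
      Finset.erase_eq_of_notMem haZ]
    ring

/-! ### Polynomials -/

lemma pderiv_pderiv_comm {σ R : Type*} [CommRing R] (i j : σ) (p : MvPolynomial σ R) :
    pderiv i (pderiv j p) = pderiv j (pderiv i p) := by
  classical
  have h : ⁅pderiv (R := R) i, pderiv (R := R) j⁆ = 0 := derivation_ext fun k ↦ by
    rw [Derivation.commutator_apply]
    simp [pderiv_X, Pi.single_apply, apply_ite]
  rw [← sub_eq_zero, ← Derivation.commutator_apply, h, Derivation.zero_apply]

lemma eval_smul_of_isHomogeneous {σ R : Type*} [CommSemiring R] {p : MvPolynomial σ R} {n : ℕ}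
    (hp : p.IsHomogeneous n) (c : R) (x : σ → R) : eval (c • x) p = c ^ n * eval x p := by
  simp only [eval_eq, Finset.mul_sum]
  refine Finset.sum_congr rfl fun m hm ↦ ?_
  rw [hp.degree_eq_sum_deg_support hm, ← Finset.prod_pow_eq_pow_sum]
  simp [mul_pow, Finset.prod_mul_distrib, mul_left_comm]

lemma hasFDerivAt_eval {σ 𝕜 : Type*} [Fintype σ] [NontriviallyNormedField 𝕜]
    (p : MvPolynomial σ 𝕜) (x : σ → 𝕜) :
    HasFDerivAt (fun y ↦ eval y p)
      (∑ i, eval x (pderiv i p) • ContinuousLinearMap.proj (R := 𝕜) (φ := fun _ ↦ 𝕜) i) x := by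
  classical
  induction p using MvPolynomial.induction_on with
  | C a =>
    simp only [eval_C]
    exact (hasFDerivAt_const a x).congr_fderiv (by ext; simp)
  | add p q hp hq =>
    simp only [map_add]
    exact (hp.fun_add hq).congr_fderiv (by ext; simp [add_mul, Finset.sum_add_distrib])
  | mul_X p j hp =>
    simp only [map_mul, eval_X]
    refine (hp.fun_mul (hasFDerivAt_apply j x)).congr_fderiv ?_
    ext v
    simp [pderiv_X, Pi.single_apply, apply_ite, mul_add, Finset.sum_add_distrib,
      Finset.mul_sum, mul_comm, mul_left_comm]

-- Modulo `b X - a Y` the variables are `X = a l` and `Y = b l` for a linear form `l`.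
lemma linear_dvd_of_forall_eval_eq_zero {R : Type*} [CommRing R] [IsDomain R] [Infinite R]
    {a b : R} (hab : IsCoprime a b) {p : MvPolynomial (Fin 2) R}
    (h : ∀ t : R, eval (t • ![a, b]) p = 0) : C b * X 0 - C a * X 1 ∣ p := by
  obtain ⟨u, v, huv⟩ := hab
  set l : MvPolynomial (Fin 2) R := C u * X 0 + C v * X 1
  set q := Ideal.Quotient.mkₐ R (Ideal.span {(C b * X 0 - C a * X 1 : MvPolynomial (Fin 2) R)})
  have hq : q = q.comp (bind₁ ![C a * l, C b * l]) := by
    have hC : C u * C a + C v * C b = (1 : MvPolynomial (Fin 2) R) := by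
      rw [← C_mul, ← C_mul, ← C_add, huv, C_1]
    refine MvPolynomial.algHom_ext fun i ↦ Ideal.Quotient.eq.mpr ?_
    rw [Ideal.mem_span_singleton]
    fin_cases i
    · refine ⟨C v, ?_⟩
      simp only [Fin.zero_eta, RingHom.coe_coe, bind₁_X_right, Matrix.cons_val_zero, l]
      linear_combination -X 0 * hC
    · refine ⟨-C u, ?_⟩
      simp only [Fin.mk_one, RingHom.coe_coe, bind₁_X_right, Matrix.cons_val_one,
        Matrix.cons_val_fin_one, l]
      linear_combination -X 1 * hC
  have hp : bind₁ ![C a * l, C b * l] p = 0 := by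
    refine MvPolynomial.funext fun x ↦ ?_
    rw [map_zero, ← h (eval x l)]
    refine (eval₂Hom_bind₁ (RingHom.id R) x _ p).trans ?_
    congr 2
    funext i
    fin_cases i <;> simp [mul_comm]
  rw [← Ideal.mem_span_singleton, ← Ideal.Quotient.eq_zero_iff_mem]
  have := congr($hq p)
  rw [AlgHom.comp_apply, hp, map_zero] at this
  exact this

/-! ### Gradient fields -/

/-- The polynomial function of `f` on the plane `ℝ²`, identified with `ℂ`. -/
noncomputable def evalPlane (f : MvPolynomial (Fin 2) ℝ) (z : ℂ) : ℝ :=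
  evalP f z.re z.im

/-- The gradient of `f` as a vector field on the plane `ℝ²`, identified with `ℂ`. -/
noncomputable def gradField (f : MvPolynomial (Fin 2) ℝ) (z : ℂ) : ℂ :=
  ⟨evalPlane (pderiv 0 f) z, evalPlane (pderiv 1 f) z⟩

section Plane

variable (f : MvPolynomial (Fin 2) ℝ) (z : ℂ)

lemma contDiff_evalPlane {n : WithTop ℕ∞} : ContDiff ℝ n (evalPlane f) := by
  have h := AnalyticOnNhd.eval_continuousLinearMap' ![Complex.reCLM, Complex.imCLM] f
  refine AnalyticOnNhd.contDiff (h.congr isOpen_univ fun z _ ↦ ?_)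
  simp only [evalPlane, evalP]
  congr 2
  funext i
  fin_cases i <;> rfl

lemma hasFDerivAt_evalPlane :
    HasFDerivAt (evalPlane f) (evalPlane (pderiv 0 f) z • Complex.reCLM +
      evalPlane (pderiv 1 f) z • Complex.imCLM) z := by
  have hpair : HasFDerivAt (fun w : ℂ ↦ ![w.re, w.im])
      (ContinuousLinearMap.pi ![Complex.reCLM, Complex.imCLM]) z := by
    rw [hasFDerivAt_pi']
    intro i
    fin_cases i
    exacts [Complex.reCLM.hasFDerivAt, Complex.imCLM.hasFDerivAt]
  refine ((hasFDerivAt_eval f _).comp z hpair).congr_fderiv ?_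
  ext; simp [evalPlane, evalP]

lemma contDiff_gradField {n : WithTop ℕ∞} : ContDiff ℝ n (gradField f) :=
  Complex.equivRealProdCLM.symm.contDiff.comp
    ((contDiff_evalPlane (pderiv 0 f)).prodMk (contDiff_evalPlane (pderiv 1 f)))

lemma hasFDerivAt_gradField :
    HasFDerivAt (gradField f) ((Complex.equivRealProdCLM.symm : ℝ × ℝ →L[ℝ] ℂ) ∘L
      (fderiv ℝ (evalPlane (pderiv 0 f)) z).prod (fderiv ℝ (evalPlane (pderiv 1 f)) z)) z :=
  Complex.equivRealProdCLM.symm.hasFDerivAt.comp z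
    ((hasFDerivAt_evalPlane _ z).differentiableAt.hasFDerivAt.prodMk
      (hasFDerivAt_evalPlane _ z).differentiableAt.hasFDerivAt)

lemma det_fderiv_gradField : (fderiv ℝ (gradField f) z).det = hessDet f (z.re, z.im) := by
  rw [det_eq_re_mul_im_sub, (hasFDerivAt_gradField f z).fderiv,
    (hasFDerivAt_evalPlane _ z).fderiv, (hasFDerivAt_evalPlane _ z).fderiv,
    pderiv_pderiv_comm 0 1 f]
  simp [hessDet, evalPlane, sq]

lemma gradField_eq_zero_iff : gradField f z = 0 ↔ IsCriticalPt f (z.re, z.im) :=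
  Complex.ext_iff

lemma gradField_sum {ι : Type*} (s : Finset ι) (p : ι → MvPolynomial (Fin 2) ℝ) :
    gradField (∑ i ∈ s, p i) z = ∑ i ∈ s, gradField (p i) z := by
  apply Complex.ext <;> simp [gradField, evalPlane, evalP]

lemma evalPlane_mul (p q : MvPolynomial (Fin 2) ℝ) :
    evalPlane (p * q) z = evalPlane p z * evalPlane q z := by
  simp [evalPlane, evalP]

lemma gradField_mul (p q : MvPolynomial (Fin 2) ℝ) :
    gradField (p * q) z = evalPlane q z * gradField p z + evalPlane p z * gradField q z := by
  apply Complex.ext <;> simp [gradField, evalPlane, evalP, add_comm]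

lemma evalPlane_linear (a b : ℝ) : evalPlane (C b * X 0 - C a * X 1) z = b * z.re - a * z.im := by
  simp [evalPlane, evalP]

variable {z}

lemma gradField_linear_ne_zero (hz : z ≠ 0) (w : ℂ) :
    gradField (C z.im * X 0 - C z.re * X 1) w ≠ 0 := by
  intro h
  apply hz
  simpa [gradField, evalPlane, evalP, Complex.ext_iff, and_comm] using h

lemma linear_dvd_of_forall_evalPlane_eq_zero {p : MvPolynomial (Fin 2) ℝ} (hz : z ≠ 0)
    (h : ∀ t : ℝ, evalPlane p (t * z) = 0) : C z.im * X 0 - C z.re * X 1 ∣ p := by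
  have hcop : IsCoprime z.re z.im := by
    rw [Semifield.isCoprime_iff, ← not_and_or]
    exact fun h ↦ hz (Complex.ext h.1 h.2)
  refine linear_dvd_of_forall_eval_eq_zero hcop fun t ↦ ?_
  simpa [evalPlane, evalP, Matrix.smul_cons] using h t

end Plane

section Homogeneous

variable {F : MvPolynomial (Fin 2) ℝ} {d : ℕ}

lemma evalPlane_ofReal_mul (hF : F.IsHomogeneous d) (t : ℝ) (z : ℂ) :
    evalPlane F (t * z) = t ^ d * evalPlane F z := by
  simpa [evalPlane, evalP, Matrix.smul_cons] using eval_smul_of_isHomogeneous hF t ![z.re, z.im]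

lemma gradField_ofReal_mul (hF : F.IsHomogeneous d) (t : ℝ) (z : ℂ) :
    gradField F (t * z) = (t ^ (d - 1) : ℝ) * gradField F z := by
  apply Complex.ext <;>
    simp only [gradField, evalPlane_ofReal_mul hF.pderiv, Complex.re_ofReal_mul,
      Complex.im_ofReal_mul]

lemma re_conj_mul_gradField (hF : F.IsHomogeneous d) (z : ℂ) :
    (conj z * gradField F z).re = d * evalPlane F z := by
  have h := congr(eval ![z.re, z.im] $(hF.sum_X_mul_pderiv))
  simpa [Fin.sum_univ_two, gradField, evalPlane, evalP] using h

lemma linear_dvd_iff_evalPlane_eq_zero (hF : F.IsHomogeneous d) {z : ℂ} (hz : z ≠ 0) :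
    C z.im * X 0 - C z.re * X 1 ∣ F ↔ evalPlane F z = 0 := by
  refine ⟨?_, fun h ↦ linear_dvd_of_forall_evalPlane_eq_zero hz fun t ↦ ?_⟩
  · rintro ⟨G, rfl⟩
    rw [evalPlane_mul, evalPlane_linear]
    ring
  · rw [evalPlane_ofReal_mul hF, h, mul_zero]

/-- `F` is not divisible by the square of a nonzero real linear form. -/
def HasNoRepeatedRealLinearFactor (F : MvPolynomial (Fin 2) ℝ) : Prop :=
  ∀ a b : ℝ, (a, b) ≠ ((0 : ℝ), (0 : ℝ)) → ¬ (C b * X 0 - C a * X 1) ^ 2 ∣ F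

-- If `F = L * G` with `L` a linear form, then `∇F = G ∇L` on the line `L = 0`.
lemma gradField_ne_zero (hF : F.IsHomogeneous d) (hd : d ≠ 0)
    (hsq : HasNoRepeatedRealLinearFactor F) {z : ℂ} (hz : z ≠ 0) : gradField F z ≠ 0 := by
  intro hgrad
  have hFz : evalPlane F z = 0 := by
    have := re_conj_mul_gradField hF z
    simpa [hgrad, hd] using this
  obtain ⟨G, rfl⟩ := (linear_dvd_iff_evalPlane_eq_zero hF hz).mpr hFz
  have hG (t : ℝ) : evalPlane G (t * z) = 0 := by
    have hline : evalPlane (C z.im * X 0 - C z.re * X 1) (t * z) = 0 := by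
      rw [evalPlane_linear, Complex.re_ofReal_mul, Complex.im_ofReal_mul]
      ring
    have h := gradField_ofReal_mul hF t z
    rw [hgrad, mul_zero, gradField_mul, hline, Complex.ofReal_zero, zero_mul, add_zero] at h
    exact Complex.ofReal_eq_zero.mp
      ((mul_eq_zero.mp h).resolve_right (gradField_linear_ne_zero hz _))
  obtain ⟨K, rfl⟩ := linear_dvd_of_forall_evalPlane_eq_zero hz hG
  refine hsq z.re z.im (fun h ↦ hz (Complex.ext congr(Prod.fst $h) congr(Prod.snd $h))) ⟨K, ?_⟩
  ring

lemma linMult_eq_ite (hF : F.IsHomogeneous d) (hsq : HasNoRepeatedRealLinearFactor F) {z : ℂ}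
    (hz : z ≠ 0) [Decidable (evalPlane F z = 0)] :
    linMult F z.re z.im = if evalPlane F z = 0 then 1 else 0 := by
  have hle : ∀ m ∈ {m : ℕ | (C z.im * X 0 - C z.re * X 1) ^ m ∣ F}, m ≤ 1 := fun m hm ↦ by
    by_contra! hlt
    exact hsq z.re z.im (fun h ↦ hz (Complex.ext congr(Prod.fst $h) congr(Prod.snd $h)))
      ((pow_dvd_pow _ hlt).trans hm)
  have hdvd := linear_dvd_iff_evalPlane_eq_zero hF hz
  split_ifs with h
  · exact IsGreatest.csSup_eq ⟨by simpa using hdvd.mpr h, hle⟩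
  · refine IsGreatest.csSup_eq ⟨by simp, fun m hm ↦ ?_⟩
    have : m ≠ 1 := by
      rintro rfl
      exact h (hdvd.mp (by simpa using hm))
    have := hle m hm
    lia

end Homogeneous

/-! ### Homogeneous gradients on the unit circle -/

/-- The gradient of `F` along the unit circle in the polar frame `(e_r, e_θ)`: its real part is the
radial derivative of `F` at `e^{iθ}` and its imaginary part the angular derivative. -/
noncomputable def polarGradField (F : MvPolynomial (Fin 2) ℝ) (θ : ℝ) : ℂ :=
  conj (circleMap 0 1 θ) * gradField F (circleMap 0 1 θ)

section PolarGradField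

variable {F : MvPolynomial (Fin 2) ℝ} {d : ℕ}

lemma circleMap_mul_polarGradField (θ : ℝ) :
    circleMap 0 1 θ * polarGradField F θ = gradField F (circleMap 0 1 θ) := by
  rw [polarGradField, ← mul_assoc, Complex.mul_conj, Complex.normSq_eq_norm_sq]
  simp

lemma contDiff_polarGradField {n : WithTop ℕ∞} : ContDiff ℝ n (polarGradField F) :=
  (Complex.conjCLE.contDiff.comp (contDiff_circleMap 0 1)).mul
    ((contDiff_gradField F).comp (contDiff_circleMap 0 1))

lemma hasDerivAt_evalPlane_circleMap (θ : ℝ) :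
    HasDerivAt (fun t ↦ evalPlane F (circleMap 0 1 t)) (polarGradField F θ).im θ := by
  refine ((hasFDerivAt_evalPlane F _).comp_hasDerivAt θ (hasDerivAt_circleMap 0 1 θ)).congr_deriv ?_
  simp only [add_apply, smul_apply, Complex.reCLM_apply, Complex.imCLM_apply, smul_eq_mul,
    Complex.mul_re, Complex.mul_im, Complex.conj_re, Complex.conj_im, Complex.I_re, Complex.I_im,
    polarGradField, gradField]
  ring

lemma re_polarGradField (hF : F.IsHomogeneous d) (θ : ℝ) :
    (polarGradField F θ).re = d * evalPlane F (circleMap 0 1 θ) :=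
  re_conj_mul_gradField hF _

lemma re_deriv_polarGradField (hF : F.IsHomogeneous d) (θ : ℝ) :
    (deriv (polarGradField F) θ).re = d * (polarGradField F θ).im := by
  have hre : HasDerivAt (fun t ↦ (polarGradField F t).re) (deriv (polarGradField F) θ).re θ :=
    Complex.reCLM.hasFDerivAt.comp_hasDerivAt θ
      (contDiff_polarGradField.differentiable one_ne_zero θ).hasDerivAt
  simp only [re_polarGradField hF] at hre
  exact hre.unique ((hasDerivAt_evalPlane_circleMap θ).const_mul _)

lemma polarGradField_add_pi (hF : F.IsHomogeneous d) (θ : ℝ) :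
    polarGradField F (θ + π) = (-((-1) ^ (d - 1)) : ℝ) * polarGradField F θ := by
  have hneg : circleMap 0 1 (θ + π) = (-1 : ℝ) * circleMap 0 1 θ := by
    simp [circleMap, add_mul, Complex.exp_add]
  rw [polarGradField, polarGradField, hneg, gradField_ofReal_mul hF]
  push_cast
  simp only [map_mul, map_neg, map_one]
  ring

lemma periodic_logDeriv_polarGradField (hF : F.IsHomogeneous d) :
    Function.Periodic (logDeriv (polarGradField F)) π := fun θ ↦ by
  have hc : ((-((-1) ^ (d - 1)) : ℝ) : ℂ) ≠ 0 := by simp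
  calc logDeriv (polarGradField F) (θ + π)
      = logDeriv (fun t ↦ polarGradField F (t + π)) θ := by
        rw [logDeriv_apply, logDeriv_apply, deriv_comp_add_const]
    _ = logDeriv (polarGradField F) θ := by
        simp only [polarGradField_add_pi hF]
        exact logDeriv_const_mul θ _ hc

variable (hF : F.IsHomogeneous d) (hd : d ≠ 0) (hsq : HasNoRepeatedRealLinearFactor F)
include hF hd hsq

lemma polarGradField_ne_zero (θ : ℝ) : polarGradField F θ ≠ 0 := by
  have hz : circleMap 0 1 θ ≠ 0 := circleMap_ne_center one_ne_zero
  exact mul_ne_zero ((map_ne_zero _).mpr hz) (gradField_ne_zero hF hd hsq hz)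

lemma im_polarGradField_ne_zero {θ : ℝ} (hθ : evalPlane F (circleMap 0 1 θ) = 0) :
    (polarGradField F θ).im ≠ 0 := fun him ↦
  polarGradField_ne_zero hF hd hsq θ
    (Complex.ext (by simp [re_polarGradField hF, hθ]) him)

lemma finite_setOf_evalPlane_circleMap_eq_zero :
    {θ ∈ Set.Ico 0 π | evalPlane F (circleMap 0 1 θ) = 0}.Finite := by
  refine (finite_setOf_mem_and_eq_zero (f := fun θ ↦ evalPlane F (circleMap 0 1 θ))
    ((contDiff_evalPlane F (n := 0)).continuous.comp (continuous_circleMap 0 1)) isCompact_Icc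
    fun θ _ hθ ↦ ?_).subset fun θ hθ ↦ ⟨Set.Ico_subset_Icc_self hθ.1, hθ.2⟩
  exact (hasDerivAt_evalPlane_circleMap θ).eventually_ne
    (im_polarGradField_ne_zero hF hd hsq hθ)

theorem integral_im_logDeriv_polarGradField {Z : Finset ℝ}
    (hZ : ∀ θ, θ ∈ Z ↔ θ ∈ Set.Ico 0 π ∧ evalPlane F (circleMap 0 1 θ) = 0) :
    ∫ θ in 0..π, (logDeriv (polarGradField F) θ).im = -π * Z.card := by
  have hd' : (d : ℝ) ≠ 0 := Nat.cast_ne_zero.mpr hd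
  have hre (θ : ℝ) : (polarGradField F θ).re = 0 ↔ evalPlane F (circleMap 0 1 θ) = 0 := by
    rw [re_polarGradField hF, mul_eq_zero_iff_left hd']
  refine integral_im_logDeriv_eq_neg_pi_mul_card (contDiff_polarGradField (n := 1))
    (polarGradField_ne_zero hF hd hsq) (fun θ hθ ↦ ?_) Real.pi_pos (c := -((-1) ^ (d - 1)))
    (by simp) ?_ fun θ ↦ (hZ θ).trans (and_congr_right' (hre θ).symm)
  · have him := im_polarGradField_ne_zero hF hd hsq ((hre θ).mp hθ)
    rw [re_deriv_polarGradField hF, mul_assoc]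
    exact mul_pos (Nat.cast_pos.mpr hd.bot_lt) (mul_self_pos.mpr him)
  · simpa using polarGradField_add_pi hF 0

theorem im_windingIntegral_gradField_circleMap {Z : Finset ℝ}
    (hZ : ∀ θ, θ ∈ Z ↔ θ ∈ Set.Ico 0 π ∧ evalPlane F (circleMap 0 1 θ) = 0) :
    (windingIntegral fun θ ↦ gradField F (circleMap 0 1 θ)).im = 2 * π * (1 - Z.card) := by
  have hint (a b : ℝ) : IntervalIntegrable (logDeriv (polarGradField F)) volume a b :=
    (continuous_logDeriv contDiff_polarGradField
      (polarGradField_ne_zero hF hd hsq)).intervalIntegrable a b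
  have hpolar : (windingIntegral (polarGradField F)).im = 2 * (-π * Z.card) := by
    have him := Complex.imCLM.intervalIntegral_comp_comm (hint 0 π)
    have hper := (periodic_logDeriv_polarGradField hF).intervalIntegral_add_eq (-π) 0
    rw [neg_add_cancel, zero_add] at hper
    rw [windingIntegral, ← intervalIntegral.integral_add_adjacent_intervals (hint (-π) 0)
      (hint 0 π), hper, ← integral_im_logDeriv_polarGradField hF hd hsq hZ]
    simp only [Complex.imCLM_apply] at him
    rw [him, Complex.add_im, two_mul]
  simp only [← circleMap_mul_polarGradField]
  rw [windingIntegral_mul (contDiff_circleMap 0 1) contDiff_polarGradField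
    (fun _ ↦ circleMap_ne_center one_ne_zero) (polarGradField_ne_zero hF hd hsq),
    windingIntegral_circleMap one_ne_zero, Complex.add_im, hpolar]
  simp only [Complex.mul_im, Complex.mul_re, Complex.re_ofNat, Complex.im_ofNat, Complex.ofReal_re,
    Complex.ofReal_im, Complex.I_re, Complex.I_im]
  ring

end PolarGradField

lemma circleMap_pi_div_two_sub_arctan (a : ℝ) :
    circleMap 0 1 (π / 2 - Real.arctan a) = (√(1 + a ^ 2))⁻¹ * (⟨a, 1⟩ : ℂ) := by
  rw [circleMap_zero, Complex.ofReal_one, one_mul]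
  apply Complex.ext
  · rw [Complex.exp_ofReal_mul_I_re, Real.cos_pi_div_two_sub, Real.sin_arctan,
      Complex.re_ofReal_mul, div_eq_inv_mul]
  · rw [Complex.exp_ofReal_mul_I_im, Real.sin_pi_div_two_sub, Real.cos_arctan,
      Complex.im_ofReal_mul, mul_one, one_div]

section RealDegree

variable {F : MvPolynomial (Fin 2) ℝ} {d : ℕ}

lemma evalPlane_circleMap_pi_div_two_sub_arctan_eq_zero_iff (hF : F.IsHomogeneous d) (a : ℝ) :
    evalPlane F (circleMap 0 1 (π / 2 - Real.arctan a)) = 0 ↔ evalPlane F ⟨a, 1⟩ = 0 := by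
  have hpos : 0 < √(1 + a ^ 2) := by positivity
  rw [circleMap_pi_div_two_sub_arctan, evalPlane_ofReal_mul hF,
    mul_eq_zero_iff_left (pow_ne_zero d (inv_ne_zero hpos.ne'))]

variable (hF : F.IsHomogeneous d) {Z : Finset ℝ}
  (hZ : ∀ θ, θ ∈ Z ↔ θ ∈ Set.Ico 0 π ∧ evalPlane F (circleMap 0 1 θ) = 0)
include hF hZ

-- The point `[a : 1]` of the projective line has polar angle `π / 2 - arctan a`, and `[1 : 0]`
-- has polar angle `0`.
lemma image_pi_div_two_sub_arctan_eq_erase_zero :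
    (fun a ↦ π / 2 - Real.arctan a) '' {a : ℝ | evalPlane F ⟨a, 1⟩ = 0} = Z.erase 0 := by
  ext θ
  simp only [Finset.coe_erase, Set.mem_sdiff, Finset.mem_coe, hZ, Set.mem_singleton_iff]
  constructor
  · rintro ⟨a, ha, rfl⟩
    have hlt := Real.arctan_lt_pi_div_two a
    have hgt := Real.neg_pi_div_two_lt_arctan a
    exact ⟨⟨⟨by linarith, by linarith⟩,
      (evalPlane_circleMap_pi_div_two_sub_arctan_eq_zero_iff hF a).mpr ha⟩, by linarith⟩
  · rintro ⟨⟨⟨hθ0, hθπ⟩, hθ⟩, hne⟩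
    have hpos : 0 < θ := hθ0.lt_of_ne' hne
    have harctan : π / 2 - Real.arctan (Real.tan (π / 2 - θ)) = θ := by
      rw [Real.arctan_tan (by linarith) (by linarith), sub_sub_cancel]
    refine ⟨Real.tan (π / 2 - θ), ?_, harctan⟩
    exact (evalPlane_circleMap_pi_div_two_sub_arctan_eq_zero_iff hF _).mp (harctan.symm ▸ hθ)

theorem realDegreeOf_eq_card (hsq : HasNoRepeatedRealLinearFactor F) :
    realDegreeOf F = Z.card := by
  classical
  have hfinsum : ∑ᶠ a : ℝ, linMult F a 1 = (Z.erase 0).card := by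
    have himage := image_pi_div_two_sub_arctan_eq_erase_zero hF hZ
    have hinj : Function.Injective fun a ↦ π / 2 - Real.arctan a := fun a b h ↦
      Real.arctan_injective (sub_right_injective h)
    have hfin : {a : ℝ | evalPlane F ⟨a, 1⟩ = 0}.Finite :=
      .of_finite_image (himage ▸ Finset.finite_toSet _) hinj.injOn
    have hlin (a : ℝ) : linMult F a 1 = if a ∈ hfin.toFinset then 1 else 0 := by
      simp only [Set.Finite.mem_toFinset, Set.mem_ofPred_eq]
      exact linMult_eq_ite hF hsq (z := ⟨a, 1⟩) fun h ↦ one_ne_zero congr(Complex.im $h)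
    calc ∑ᶠ a : ℝ, linMult F a 1 = ∑ a ∈ hfin.toFinset, linMult F a 1 :=
          finsum_eq_sum_of_support_subset _ fun a ha ↦ by
            by_contra h
            exact ha ((hlin a).trans (if_neg h))
      _ = hfin.toFinset.card := by
          simp only [hlin, Finset.sum_ite_mem, Finset.inter_self, Finset.sum_const, smul_eq_mul,
            mul_one]
      _ = (Z.erase 0).card := by
          rw [← Set.ncard_eq_toFinset_card _ hfin, ← Set.ncard_image_of_injective _ hinj, himage,
            Set.ncard_coe_finset]
  have hzero : linMult F 1 0 = if 0 ∈ Z then 1 else 0 := by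
    have hmem : evalPlane F 1 = 0 ↔ 0 ∈ Z := by
      simp [hZ, Real.pi_pos, circleMap_zero]
    simpa only [hmem, Complex.one_re, Complex.one_im] using linMult_eq_ite hF hsq one_ne_zero
  rw [realDegreeOf, hfinsum, hzero]
  split_ifs with h
  · exact Finset.card_erase_add_one h
  · rw [Finset.erase_eq_of_notMem h, add_zero]

end RealDegree

theorem im_windingIntegral_gradField_circleMap_eq_realDegreeOf
    {F : MvPolynomial (Fin 2) ℝ} {d : ℕ} (hF : F.IsHomogeneous d) (hd : d ≠ 0)
    (hsq : HasNoRepeatedRealLinearFactor F) :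
    (windingIntegral fun θ ↦ gradField F (circleMap 0 1 θ)).im =
      2 * π * (1 - realDegreeOf F) := by
  have hZ (θ : ℝ) := (finite_setOf_evalPlane_circleMap_eq_zero hF hd hsq).mem_toFinset (a := θ)
  rw [im_windingIntegral_gradField_circleMap hF hd hsq hZ, realDegreeOf_eq_card hF hZ hsq]

/-! ### Behaviour at infinity -/

section Growth

variable {F : MvPolynomial (Fin 2) ℝ} {d : ℕ}

lemma norm_gradField_eq (hF : F.IsHomogeneous d) {z : ℂ} (hz : z ≠ 0) :
    ‖gradField F z‖ = ‖gradField F (z / ‖z‖)‖ * ‖z‖ ^ (d - 1) := by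
  have hz' : (‖z‖ : ℂ) ≠ 0 := by simpa using hz
  conv_lhs => rw [← mul_div_cancel₀ z hz', gradField_ofReal_mul hF]
  simp [mul_comm]

lemma isBigO_gradField (hF : F.IsHomogeneous d) :
    gradField F =O[Bornology.cobounded ℂ] fun z ↦ ‖z‖ ^ (d - 1) := by
  obtain ⟨M, hM⟩ := (isCompact_sphere (0 : ℂ) 1).exists_bound_of_continuousOn
    (contDiff_gradField F (n := 0)).continuous.continuousOn
  refine .of_bound M ((Bornology.eventually_ne_cobounded 0).mono fun z hz ↦ ?_)
  rw [norm_gradField_eq hF hz, norm_pow, norm_norm]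
  gcongr
  exact hM _ (by simp [hz])

lemma isBigO_norm_pow_gradField (hF : F.IsHomogeneous d) (hd : d ≠ 0)
    (hsq : HasNoRepeatedRealLinearFactor F) :
    (fun z : ℂ ↦ ‖z‖ ^ (d - 1)) =O[Bornology.cobounded ℂ] gradField F := by
  obtain ⟨M, hM⟩ := (isCompact_sphere (0 : ℂ) 1).exists_bound_of_continuousOn
    ((contDiff_gradField F (n := 0)).continuous.continuousOn.inv₀ fun z hz ↦
      gradField_ne_zero hF hd hsq (ne_zero_of_mem_unit_sphere ⟨z, hz⟩))
  refine .of_bound M ((Bornology.eventually_ne_cobounded 0).mono fun z hz ↦ ?_)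
  have hu : z / ‖z‖ ∈ Metric.sphere (0 : ℂ) 1 := by simp [hz]
  have hpos : 0 < ‖gradField F (z / ‖z‖)‖ :=
    norm_pos_iff.mpr (gradField_ne_zero hF hd hsq (ne_zero_of_mem_unit_sphere ⟨_, hu⟩))
  have hM' : 1 ≤ M * ‖gradField F (z / ‖z‖)‖ := by
    simpa only [Pi.inv_apply, norm_inv, inv_le_iff_one_le_mul₀ hpos] using hM _ hu
  rw [norm_gradField_eq hF hz, norm_pow, norm_norm, ← mul_assoc]
  exact le_mul_of_one_le_left (by positivity) hM'

end Growth

/-- The homogeneous part of `f` of degree `deg f`. -/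
noncomputable def leadingForm (f : MvPolynomial (Fin 2) ℝ) : MvPolynomial (Fin 2) ℝ :=
  homogeneousComponent f.totalDegree f

lemma leadingForm_isHomogeneous (f : MvPolynomial (Fin 2) ℝ) :
    (leadingForm f).IsHomogeneous f.totalDegree :=
  homogeneousComponent_isHomogeneous _ f

lemma gradField_C (c : ℝ) : gradField (C c) = 0 := by
  funext z
  simp [gradField, evalPlane, evalP, Complex.ext_iff]

lemma gradField_sub_leadingForm (f : MvPolynomial (Fin 2) ℝ) (z : ℂ) :
    gradField f z - gradField (leadingForm f) z =
      ∑ k ∈ Finset.range f.totalDegree, gradField (homogeneousComponent k f) z := by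
  rw [sub_eq_iff_eq_add, leadingForm, ← Finset.sum_range_succ
    (fun k ↦ gradField (homogeneousComponent k f) z), ← gradField_sum, sum_homogeneousComponent]

lemma isLittleO_gradField_sub_leadingForm (f : MvPolynomial (Fin 2) ℝ) :
    (fun z ↦ gradField f z - gradField (leadingForm f) z) =o[Bornology.cobounded ℂ]
      fun z ↦ ‖z‖ ^ (f.totalDegree - 1) := by
  simp only [gradField_sub_leadingForm]
  refine Asymptotics.IsLittleO.fun_sum fun k hk ↦ ?_
  obtain rfl | hk0 := eq_or_ne k 0
  · rw [homogeneousComponent_zero, gradField_C]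
    exact Asymptotics.isLittleO_zero _ _
  · refine (isBigO_gradField (homogeneousComponent_isHomogeneous k f)).trans_isLittleO ?_
    have hlt : k - 1 < f.totalDegree - 1 := by
      have := Finset.mem_range.mp hk
      lia
    exact (Asymptotics.isLittleO_pow_pow_atTop_of_lt hlt).comp_tendsto
      tendsto_norm_cobounded_atTop

lemma windingIntegral_gradField_circleMap_eq {f : MvPolynomial (Fin 2) ℝ} {R : ℝ} (hR : 0 < R)
    (h : ∀ z : ℂ, R ≤ ‖z‖ →
      ‖gradField f z - gradField (leadingForm f) z‖ < ‖gradField (leadingForm f) z‖) :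
    windingIntegral (fun θ ↦ gradField f (circleMap 0 R θ)) =
      windingIntegral fun θ ↦ gradField (leadingForm f) (circleMap 0 1 θ) := by
  have hscale (θ : ℝ) : gradField (leadingForm f) (circleMap 0 R θ) =
      (R ^ (f.totalDegree - 1) : ℝ) * gradField (leadingForm f) (circleMap 0 1 θ) := by
    rw [← gradField_ofReal_mul (leadingForm_isHomogeneous f)]
    simp [circleMap]
  have hsmooth (p : MvPolynomial (Fin 2) ℝ) :
      ContDiff ℝ 1 fun θ ↦ gradField p (circleMap 0 R θ) :=
    (contDiff_gradField p).comp (contDiff_circleMap 0 R)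
  rw [windingIntegral_eq_of_norm_sub_lt (hsmooth (leadingForm f)) (hsmooth f)
    (by rw [circleMap_neg_pi]) (by rw [circleMap_neg_pi]) fun θ ↦ h _ (by simp [le_abs_self])]
  simp only [hscale]
  exact windingIntegral_const_mul
    (Complex.ofReal_ne_zero.mpr (pow_ne_zero _ hR.ne')) _

lemma norm_lt_of_gradField_eq_zero {f : MvPolynomial (Fin 2) ℝ} {R : ℝ} (h : ∀ z : ℂ, R ≤ ‖z‖ →
      ‖gradField f z - gradField (leadingForm f) z‖ < ‖gradField (leadingForm f) z‖)
    {z : ℂ} (hz : gradField f z = 0) : ‖z‖ < R := by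
  by_contra! hle
  have hlt := h z hle
  rw [hz, zero_sub, norm_neg] at hlt
  exact hlt.false

section GradientIndex

variable {f : MvPolynomial (Fin 2) ℝ} (hd : f.totalDegree ≠ 0)
  (hsq : HasNoRepeatedRealLinearFactor (leadingForm f))
include hd hsq

lemma exists_forall_norm_gradField_sub_leadingForm_lt :
    ∃ R > 0, ∀ z : ℂ, R ≤ ‖z‖ →
      ‖gradField f z - gradField (leadingForm f) z‖ < ‖gradField (leadingForm f) z‖ := by
  have hF := leadingForm_isHomogeneous f
  have hlo := (isLittleO_gradField_sub_leadingForm f).trans_isBigO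
    (isBigO_norm_pow_gradField hF hd hsq)
  obtain ⟨R, -, hR⟩ := (hasBasis_cobounded_norm.eventually_iff).mp
    (hlo.def (c := 1 / 2) (by norm_num))
  refine ⟨max R 1, by positivity, fun z hz ↦ ?_⟩
  have hz0 : z ≠ 0 := norm_pos_iff.mp (zero_lt_one.trans_le ((le_max_right R 1).trans hz))
  have hpos := norm_pos_iff.mpr (gradField_ne_zero hF hd hsq hz0)
  have hhalf := hR (x := z) ((le_max_left R 1).trans hz)
  linarith

lemma finite_setOf_gradField_eq_zero
    (hnd : ∀ p : ℝ × ℝ, IsCriticalPt f p → hessDet f p ≠ 0) :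
    {z | gradField f z = 0}.Finite := by
  obtain ⟨R, -, hR⟩ := exists_forall_norm_gradField_sub_leadingForm_lt hd hsq
  refine (finite_setOf_mem_and_eq_zero (contDiff_gradField f (n := 0)).continuous
    (isCompact_closedBall 0 R) fun z _ hz ↦ ?_).subset fun z hz ↦
      ⟨mem_closedBall_zero_iff.mpr ?_, hz⟩
  · refine eventually_nhdsNE_ne_of_det_ne_zero (contDiff_gradField f).contDiffAt ?_ 0
    rw [det_fderiv_gradField]
    exact hnd _ ((gradField_eq_zero_iff f z).mp hz)
  · exact (norm_lt_of_gradField_eq_zero hR hz).le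

theorem finite_setOf_isCriticalPt (hnd : ∀ p : ℝ × ℝ, IsCriticalPt f p → hessDet f p ≠ 0) :
    {p | IsCriticalPt f p}.Finite := by
  refine ((finite_setOf_gradField_eq_zero hd hsq hnd).preimage
    Complex.equivRealProd.symm.injective.injOn).subset fun p hp ↦ ?_
  exact (gradField_eq_zero_iff f _).mpr hp

theorem sum_sign_hessDet_eq_one_sub_realDegreeOf {S : Finset (ℝ × ℝ)}
    (hS : ∀ p, p ∈ S ↔ IsCriticalPt f p)
    (hnd : ∀ p : ℝ × ℝ, IsCriticalPt f p → hessDet f p ≠ 0) :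
    ∑ p ∈ S, (SignType.sign (hessDet f p) : ℤ) = 1 - realDegreeOf (leadingForm f) := by
  have hF := leadingForm_isHomogeneous f
  obtain ⟨R, hR0, hR⟩ := exists_forall_norm_gradField_sub_leadingForm_lt hd hsq
  let T : Finset ℂ := S.map Complex.equivRealProd.symm.toEmbedding
  have hT (z : ℂ) : z ∈ T ↔ gradField f z = 0 := by
    rw [gradField_eq_zero_iff, ← hS, Finset.mem_map_equiv, Equiv.symm_symm,
      Complex.equivRealProd_apply]
  have hTR (z : ℂ) (hz : z ∈ T) : ‖z‖ < R := norm_lt_of_gradField_eq_zero hR ((hT z).mp hz)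
  have hwinding := windingIntegral_eq_sum_sign_det (contDiff_gradField f) hR0 (S := T)
    (fun z ↦ ⟨fun hz ↦ ⟨mem_closedBall_zero_iff.mpr (hTR z hz).le, (hT z).mp hz⟩,
      fun hz ↦ (hT z).mpr hz.2⟩)
    (fun z hz ↦ mem_ball_zero_iff.mpr (hTR z hz))
    fun z hz ↦ by
      rw [det_fderiv_gradField]
      exact hnd _ ((gradField_eq_zero_iff f z).mp ((hT z).mp hz))
  have hdegree := im_windingIntegral_gradField_circleMap_eq_realDegreeOf hF hd hsq
  have hsum : ∑ z ∈ T, (SignType.sign (fderiv ℝ (gradField f) z).det : ℤ) =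
      ∑ p ∈ S, (SignType.sign (hessDet f p) : ℤ) := by
    simp only [T, Finset.sum_map, det_fderiv_gradField]
    rfl
  have him : 2 * π * ((∑ p ∈ S, (SignType.sign (hessDet f p) : ℤ) : ℤ) : ℝ) =
      2 * π * (1 - realDegreeOf (leadingForm f)) := by
    rw [← hdegree, ← windingIntegral_gradField_circleMap_eq hR0 hR, hwinding, hsum]
    generalize ∑ p ∈ S, (SignType.sign (hessDet f p) : ℤ) = N
    simp
  exact_mod_cast mul_left_cancel₀ Real.two_pi_pos.ne' him

end GradientIndex

lemma sum_sign_eq_card_sub_card {α : Type*} (s : Finset α) (g : α → ℝ) :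
    ∑ a ∈ s, (SignType.sign (g a) : ℤ) = #{a ∈ s | 0 < g a} - #{a ∈ s | g a < 0} := by
  have hsign (a : α) : (SignType.sign (g a) : ℤ) =
      (if 0 < g a then 1 else 0) - if g a < 0 then 1 else 0 := by
    obtain h | h | h := lt_trichotomy (g a) 0 <;> simp [h, h.not_gt]
  simp only [hsign, Finset.sum_sub_distrib, Finset.sum_boole]

theorem extrema_minus_saddles_eq_one_sub_real_degree
    (f : MvPolynomial (Fin 2) ℝ) (d : ℕ) (hd : f.totalDegree = d) (hd1 : 1 ≤ d)
    (hnd : ∀ p : ℝ × ℝ, IsCriticalPt f p → hessDet f p ≠ 0)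
    (hsq : ∀ a b : ℝ, (a, b) ≠ ((0 : ℝ), (0 : ℝ)) →
      ¬ ((C b * X 0 - C a * X 1) ^ 2 ∣ homogeneousComponent d f)) :
    {p : ℝ × ℝ | IsCriticalPt f p}.Finite ∧
    ({p : ℝ × ℝ | IsCriticalPt f p ∧ 0 < hessDet f p}.ncard : ℤ) -
      ({p : ℝ × ℝ | IsCriticalPt f p ∧ hessDet f p < 0}.ncard : ℤ) =
      1 - (realDegreeOf (homogeneousComponent d f) : ℤ) := by
  subst hd
  have hd0 : f.totalDegree ≠ 0 := Nat.one_le_iff_ne_zero.mp hd1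
  have hfin : {p | IsCriticalPt f p}.Finite := finite_setOf_isCriticalPt hd0 hsq hnd
  refine ⟨hfin, ?_⟩
  have hsum := sum_sign_hessDet_eq_one_sub_realDegreeOf hd0 hsq (fun p ↦ hfin.mem_toFinset) hnd
  rw [sum_sign_eq_card_sub_card] at hsum
  rw [← leadingForm, ← hsum, ← Set.ncard_coe_finset, ← Set.ncard_coe_finset]
  simp only [Finset.coe_filter, Set.Finite.mem_toFinset, Set.mem_ofPred_eq]
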